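/- Theorem 2.5: Let 𝕄 be an infinite subset of ℕ, let Ω ⊆ ℂⁿ be an open convex set, let (K_m)_{m≥1} be a sequence of compact convex subsets of ℂⁿ each disjoint from Ω, let ζ ∈ Ω be fixed, and let (N_j)_{j≥0} be any enumeration of ℕⁿ. Then there exists a holomorphic function f on Ω such that: for every compact convex set K ⊆ ℂⁿ which is either disjoint from the closure of Ω or equal to K_m for some m ≥ 1, and for every holomorphic polynomial P on ℂⁿ, there exists a sequence (λ_N)_{N≥1} with λ_N ∈ 𝕄 such that S_{λ_N}(f,ζ) → P uniformly on K and S_{λ_N}(f,ζ) → f uniformly on each compact subset of Ω, as N → ∞. The set of all such functions f is a dense G_δ subset of O(Ω) with the topology of uniform convergence on compacta. -/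

import Mathlib

open Set Filter Topology

noncomputable section

/-- Evaluation of a multivariate polynomial as a function on `ℂⁿ = Fin n → ℂ`. -/
def mvEval {n : ℕ} (p : MvPolynomial (Fin n) ℂ) : (Fin n → ℂ) → ℂ :=
  fun z => MvPolynomial.eval z p

/-- The polynomially convex hull of a set in `ℂⁿ`. -/
def polyHull {n : ℕ} (K : Set (Fin n → ℂ)) : Set (Fin n → ℂ) :=
  {z | ∀ p : MvPolynomial (Fin n) ℂ, ‖mvEval p z‖ ≤ sSup ((fun w => ‖mvEval p w‖) '' K)}

/-- A set in `ℂⁿ` is polynomially convex if it equals its polynomially convex hull. -/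
def IsPolyConvex {n : ℕ} (K : Set (Fin n → ℂ)) : Prop := polyHull K = K

/-- The polynomially convex hull of a subset of `ℂ`. -/
def polyHull1 (F : Set ℂ) : Set ℂ :=
  {z | ∀ p : Polynomial ℂ, ‖p.eval z‖ ≤ sSup ((fun w => ‖p.eval w‖) '' F)}

/-- A subset of `ℂ` is polynomially convex if it equals its polynomially convex hull. -/
def IsPolyConvex1 (F : Set ℂ) : Prop := polyHull1 F = F

/-- Partial derivative in the `i`-th coordinate direction. -/
def pd {n : ℕ} (i : Fin n) (f : (Fin n → ℂ) → ℂ) : (Fin n → ℂ) → ℂ :=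
  fun z => fderiv ℂ f z (Pi.single i 1)

/-- Iterated partial derivative `D^ℓ = ∂^{ℓ₁+⋯+ℓₙ}/∂z₁^{ℓ₁}⋯∂zₙ^{ℓₙ}`. -/
def Dml {n : ℕ} (ℓ : Fin n → ℕ) (f : (Fin n → ℂ) → ℂ) : (Fin n → ℂ) → ℂ :=
  (List.finRange n).foldr (fun i g => (pd i)^[ℓ i] g) f

/-- Partial sums `S_λ` of a Taylor-type series around `ζ`, with coefficients computed from a
given family `g` of (extended) partial derivatives: the coefficient of the monomial
`(z-ζ)^{N_j}` is `g (N_j) ζ / (N_{j,1}! ⋯ N_{j,n}!)`. -/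
def pSumExt {n : ℕ} (Nj : ℕ → Fin n → ℕ) (g : (Fin n → ℕ) → (Fin n → ℂ) → ℂ)
    (ζ : Fin n → ℂ) (lam : ℕ) : (Fin n → ℂ) → ℂ :=
  fun z => ∑ j ∈ Finset.range (lam + 1),
    (((∏ i, Nat.factorial (Nj j i) : ℕ) : ℂ))⁻¹ * g (Nj j) ζ * ∏ i, (z i - ζ i) ^ (Nj j i)

/-- Partial sums `S_λ(f,ζ)` of the Taylor development of `f` around `ζ`. -/
def pSum {n : ℕ} (Nj : ℕ → Fin n → ℕ) (f : (Fin n → ℂ) → ℂ)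
    (ζ : Fin n → ℂ) (lam : ℕ) : (Fin n → ℂ) → ℂ :=
  pSumExt Nj (fun ℓ => Dml ℓ f) ζ lam

/-- The space `O(Ω)` of holomorphic functions on `Ω`. -/
def Ospace (n : ℕ) (Ω : Set (Fin n → ℂ)) : Type :=
  {f : (Fin n → ℂ) → ℂ // DifferentiableOn ℂ f Ω}

/-- Topology of uniform convergence on compact subsets of `Ω` on `O(Ω)` (the compact-open
topology induced via restriction to `Ω`). -/
instance (n : ℕ) (Ω : Set (Fin n → ℂ)) : TopologicalSpace (Ospace n Ω) :=
  TopologicalSpace.induced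
    (fun f : Ospace n Ω =>
      (⟨Ω.restrict f.1, continuousOn_iff_continuous_restrict.mp f.2.continuousOn⟩ : C(Ω, ℂ)))
    inferInstance

/-- Membership in `A^∞(Ω)`: `f` is holomorphic on `Ω` and each partial derivative `D^ℓ f`
extends continuously to the closure of `Ω`. -/
def AinfMem (n : ℕ) (Ω : Set (Fin n → ℂ)) (f : (Fin n → ℂ) → ℂ) : Prop :=
  DifferentiableOn ℂ f Ω ∧
    ∀ ℓ : Fin n → ℕ, ∃ g : (Fin n → ℂ) → ℂ,
      ContinuousOn g (closure Ω) ∧ Set.EqOn g (Dml ℓ f) Ω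

/-- The space `A^∞(Ω)`. -/
def AinfSpace (n : ℕ) (Ω : Set (Fin n → ℂ)) : Type :=
  {f : (Fin n → ℂ) → ℂ // AinfMem n Ω f}

/-- The chosen continuous extension of `D^ℓ f` to the closure of `Ω`, for `f ∈ A^∞(Ω)`.
(Its restriction to the closure of `Ω` is uniquely determined.) -/
def AinfExt {n : ℕ} {Ω : Set (Fin n → ℂ)} (f : AinfSpace n Ω) (ℓ : Fin n → ℕ) :
    (Fin n → ℂ) → ℂ :=
  Classical.choose (f.2.2 ℓ)

lemma AinfExt_continuousOn {n : ℕ} {Ω : Set (Fin n → ℂ)} (f : AinfSpace n Ω) (ℓ : Fin n → ℕ) :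
    ContinuousOn (AinfExt f ℓ) (closure Ω) :=
  (Classical.choose_spec (f.2.2 ℓ)).1

lemma AinfExt_eqOn {n : ℕ} {Ω : Set (Fin n → ℂ)} (f : AinfSpace n Ω) (ℓ : Fin n → ℕ) :
    Set.EqOn (AinfExt f ℓ) (Dml ℓ f.1) Ω :=
  (Classical.choose_spec (f.2.2 ℓ)).2

/-- Topology on `A^∞(Ω)`: uniform convergence of every partial derivative on every compact
subset of the closure of `Ω`. -/
instance (n : ℕ) (Ω : Set (Fin n → ℂ)) : TopologicalSpace (AinfSpace n Ω) :=
  TopologicalSpace.induced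
    (fun f : AinfSpace n Ω => fun ℓ : Fin n → ℕ =>
      (⟨(closure Ω).restrict (AinfExt f ℓ),
        continuousOn_iff_continuous_restrict.mp (AinfExt_continuousOn f ℓ)⟩ :
          C(closure Ω, ℂ)))
    inferInstance

/-- A smooth compact curve in `ℂⁿ`: the image of an injective `C^∞` map with
nowhere-vanishing derivative, defined on a compact interval (an arc) or on the
circle (a closed curve, modelled by a 1-periodic map). -/
def IsSmoothCompactCurve {n : ℕ} (K : Set (Fin n → ℂ)) : Prop :=
  ∃ γ : ℝ → (Fin n → ℂ), ContDiff ℝ (⊤ : ℕ∞) γ ∧ (∀ t, deriv γ t ≠ 0) ∧ K = γ '' Set.Icc 0 1 ∧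
    (Set.InjOn γ (Set.Icc 0 1) ∨ (Function.Periodic γ 1 ∧ Set.InjOn γ (Set.Ico 0 1)))

/-- A disjoint union of finitely many smooth compact curves. -/
def IsFiniteUnionOfSmoothCurves {n : ℕ} (K : Set (Fin n → ℂ)) : Prop :=
  ∃ (m : ℕ) (C : Fin m → Set (Fin n → ℂ)),
    (∀ i, IsSmoothCompactCurve (C i)) ∧ Pairwise (Function.onFun Disjoint C) ∧ K = ⋃ i, C i



section PartOne

variable {E : Type*} [NormedAddCommGroup E] [NormedSpace ℂ E]

lemma cauchy_fderiv {f : E → ℂ} {c : E} {R M : ℝ} (hR : 0 < R)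
    (hd : DifferentiableOn ℂ f (Metric.ball c R)) (hM : ∀ z ∈ Metric.ball c R, ‖f z‖ ≤ M) :
    ‖fderiv ℂ f c‖ ≤ 2 * M / R := by
  refine Complex.norm_fderiv_le_div_of_mapsTo_ball hd (fun z hz => ?_) hR
  rw [Metric.mem_closedBall, dist_eq_norm]
  have h1 := hM z hz
  have h2 := hM c (Metric.mem_ball_self hR)
  have := norm_sub_le (f z) (f c)
  linarith

lemma quad_est {f : E → ℂ} {c z : E} {R M : ℝ} (hR : 0 < R)
    (hd : DifferentiableOn ℂ f (Metric.ball c R)) (hM : ∀ z ∈ Metric.ball c R, ‖f z‖ ≤ M)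
    (hz : z ∈ Metric.ball c R) :
    ‖f z - f c - fderiv ℂ f c (z - c)‖ ≤ 4 * M * (‖z - c‖ / R) ^ 2 := by
  have hfc : DifferentiableAt ℂ f c := hd.differentiableAt (Metric.ball_mem_nhds _ hR)
  have hc := cauchy_fderiv hR hd hM
  have hM0 : 0 ≤ M := (norm_nonneg _).trans (hM c (Metric.mem_ball_self hR))
  set g : E → ℂ := fun w => f w - f c - fderiv ℂ f c (w - c) with hg
  have hgc : g c = 0 := by simp [hg]
  have := Complex.dist_le_mul_div_pow_of_mapsTo_ball_of_isLittleO (f := g) (c := c) (z := z)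
    (R₁ := R) (R₂ := 4 * M) (n := 1) ?_ ?_ ?_ hz
  · rw [dist_eq_norm, dist_eq_norm, hgc, sub_zero] at this
    exact this
  · refine (hd.sub_const _).sub ?_
    exact ((fderiv ℂ f c).differentiable.comp (differentiable_id.sub_const c)).differentiableOn
  · intro w hw
    rw [Metric.mem_closedBall, dist_eq_norm, hgc, sub_zero]
    have h1 := hM w hw
    have h2 := hM c (Metric.mem_ball_self hR)
    have h3 : ‖fderiv ℂ f c (w - c)‖ ≤ 2 * M := by
      refine ((fderiv ℂ f c).le_opNorm _).trans ?_
      rw [Metric.mem_ball, dist_eq_norm] at hw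
      calc _ ≤ 2 * M / R * R := by gcongr
        _ = 2 * M := by field_simp
    calc ‖g w‖ ≤ ‖f w‖ + ‖f c‖ + ‖fderiv ℂ f c (w - c)‖ :=
          (norm_sub_le _ _).trans (by gcongr; exact norm_sub_le _ _)
      _ ≤ _ := by linarith
  · rw [hgc]
    simp only [sub_zero, pow_one]
    exact hfc.hasFDerivAt.isLittleO.norm_right

lemma unif_limit [ProperSpace E] {ι : Type*} {l : Filter ι} [l.NeBot] {s : Set E} (hs : IsOpen s)
    {F : ι → E → ℂ} {g : E → ℂ} (hF : TendstoLocallyUniformlyOn F g l s)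
    (hd : ∀ k, DifferentiableOn ℂ (F k) s) :
    DifferentiableOn ℂ g s ∧
      TendstoLocallyUniformlyOn (fun k => fderiv ℂ (F k)) (fderiv ℂ g) l s := by
  have key : ∀ x ∈ s, ∃ R > 0, Metric.ball x R ⊆ s ∧ (∀ y ∈ Metric.ball x R, DifferentiableAt ℂ g y) ∧
      TendstoUniformlyOn (fun k => fderiv ℂ (F k)) (fderiv ℂ g) l (Metric.ball x R) := by
    intro x hx
    obtain ⟨ρ, hρ, hρs⟩ := Metric.isOpen_iff.1 hs x hx
    obtain ⟨R, hR, hR2⟩ : ∃ R > 0, R + R < ρ := ⟨ρ / 4, by linarith, by linarith⟩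
    have hcs : Metric.closedBall x (R + R) ⊆ s :=
      (Metric.closedBall_subset_ball hR2).trans hρs
    have hbs : ∀ y ∈ Metric.ball x R, Metric.ball y R ⊆ Metric.closedBall x (R + R) := by
      intro y hy
      refine (Metric.ball_subset_ball' ?_).trans Metric.ball_subset_closedBall
      rw [Metric.mem_ball] at hy; linarith
    have hu : TendstoUniformlyOn F g l (Metric.closedBall x (R + R)) :=
      (tendstoLocallyUniformlyOn_iff_forall_isCompact hs).1 hF _ hcs (isCompact_closedBall _ _)
    have hcau : UniformCauchySeqOn (fun k => fderiv ℂ (F k)) l (Metric.ball x R) := by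
      have hc := hu.uniformCauchySeqOn
      intro u hu'
      obtain ⟨ε, hε, hεu⟩ := Metric.mem_uniformity_dist.1 hu'
      have h1 := hc _ (Metric.dist_mem_uniformity (show 0 < ε * R / 4 by positivity))
      filter_upwards [h1] with m hm y hy
      apply hεu
      have hy' : y ∈ s := hcs (hbs y hy (Metric.mem_ball_self hR))
      have hd1 := (hd m.1).differentiableAt (hs.mem_nhds hy')
      have hd2 := (hd m.2).differentiableAt (hs.mem_nhds hy')
      rw [dist_eq_norm, ← fderiv_sub hd1 hd2]
      have h3 := cauchy_fderiv (f := F m.1 - F m.2) (c := y) (R := R) (M := ε * R / 4) hR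
        (((hd m.1).sub (hd m.2)).mono ((hbs y hy).trans hcs)) (fun z hz => by
          have := hm z (hbs y hy hz)
          simp only [dist_eq_norm] at this
          exact this.le)
      refine h3.trans_lt ?_
      have : 2 * (ε * R / 4) / R = ε / 2 := by field_simp; norm_num
      rw [this]; linarith
    have hG : ∀ y ∈ Metric.ball x R, ∃ L, Tendsto (fun k => fderiv ℂ (F k) y) l (𝓝 L) := by
      intro y hy
      exact CompleteSpace.complete (hcau.cauchy_map hy)
    choose! G hG using hG
    have hGu := hcau.tendstoUniformlyOn_of_tendsto hG
    have hder : ∀ y ∈ Metric.ball x R, HasFDerivAt g (G y) y := by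
      intro y hy
      refine hasFDerivAt_of_tendstoUniformlyOn (f := F) Metric.isOpen_ball hGu (fun k z hz => ?_) (fun z hz => ?_) hy
      · exact ((hd k).differentiableAt
          (hs.mem_nhds (hcs (hbs z hz (Metric.mem_ball_self hR))))).hasFDerivAt
      · exact hu.tendsto_at (hbs z hz (Metric.mem_ball_self hR))
    refine ⟨R, hR, fun y hy => hcs (hbs y hy (Metric.mem_ball_self hR)),
      fun y hy => (hder y hy).differentiableAt, ?_⟩
    exact hGu.congr_right (fun y hy => (hder y hy).fderiv.symm)
  constructor
  · intro x hx
    obtain ⟨R, hR, -, h, -⟩ := key x hx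
    exact (h x (Metric.mem_ball_self hR)).differentiableWithinAt
  · intro u hu x hx
    obtain ⟨R, hR, -, -, h⟩ := key x hx
    exact ⟨_, mem_nhdsWithin_of_mem_nhds (Metric.ball_mem_nhds x hR), h u hu⟩

lemma fderiv_apply_differentiableOn [ProperSpace E] {s : Set E} (hs : IsOpen s) {f : E → ℂ}
    (hf : DifferentiableOn ℂ f s) (v : E) :
    DifferentiableOn ℂ (fun z => fderiv ℂ f z v) s := by
  intro x hx
  obtain ⟨ρ, hρ, hρs⟩ := Metric.isOpen_iff.1 hs x hx
  obtain ⟨R, hR, hR2⟩ : ∃ R > 0, R + R < ρ := ⟨ρ / 4, by linarith, by linarith⟩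
  have hcs : Metric.closedBall x (R + R) ⊆ s :=
    (Metric.closedBall_subset_ball hR2).trans hρs
  have hbs : ∀ y ∈ Metric.ball x R, Metric.ball y R ⊆ Metric.closedBall x (R + R) := by
    intro y hy
    refine (Metric.ball_subset_ball' ?_).trans Metric.ball_subset_closedBall
    rw [Metric.mem_ball] at hy; linarith
  obtain ⟨M, hM⟩ := (isCompact_closedBall x (R + R)).exists_bound_of_continuousOn
    (hf.continuousOn.mono hcs)
  have hM0 : 0 ≤ M := (norm_nonneg _).trans (hM x (Metric.mem_closedBall_self (by positivity)))
  set h : ℕ → ℝ := fun k => (R / (‖v‖ + 1)) * (1 / ((k : ℝ) + 1)) with hh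
  have hpos : ∀ k, 0 < h k := fun k => by positivity
  have hlt : ∀ k, h k * ‖v‖ < R := by
    intro k
    have h1 : 1 / ((k : ℝ) + 1) ≤ 1 := by
      rw [div_le_one (by positivity)]; linarith [(Nat.cast_nonneg k : (0 : ℝ) ≤ k)]
    calc h k * ‖v‖ ≤ (R / (‖v‖ + 1)) * 1 * ‖v‖ := by simp only [hh]; gcongr
      _ < R := by
        rw [mul_one, div_mul_eq_mul_div, div_lt_iff₀ (by positivity)]
        nlinarith [norm_nonneg v]
  have hh0 : Tendsto h atTop (𝓝 0) := by
    have := (tendsto_one_div_add_atTop_nhds_zero_nat (𝕜 := ℝ)).const_mul (R / (‖v‖ + 1))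
    simpa [hh] using this
  have hnorm : ∀ k, ‖((h k : ℂ)) • v‖ < R := by
    intro k
    rw [norm_smul, Complex.norm_real, Real.norm_of_nonneg (hpos k).le]
    exact hlt k
  have hmem : ∀ k, ∀ z ∈ Metric.ball x R, z + (h k : ℂ) • v ∈ Metric.ball z R := by
    intro k z _
    rw [Metric.mem_ball, dist_eq_norm, add_sub_cancel_left]
    exact hnorm k
  have hmain := (unif_limit (l := atTop) (s := Metric.ball x R) Metric.isOpen_ball
    (F := fun (k : ℕ) z => (h k : ℂ)⁻¹ * (f (z + (h k : ℂ) • v) - f z))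
    (g := fun z => fderiv ℂ f z v) ?_ ?_).1
  · exact (hmain.differentiableAt (Metric.ball_mem_nhds x hR)).differentiableWithinAt
  · apply TendstoUniformlyOn.tendstoLocallyUniformlyOn
    rw [Metric.tendstoUniformlyOn_iff]
    intro ε hε
    have hlim : Tendsto (fun k => 4 * M * (‖v‖ / R) ^ 2 * h k) atTop (𝓝 0) := by
      simpa using hh0.const_mul (4 * M * (‖v‖ / R) ^ 2)
    filter_upwards [hlim.eventually (gt_mem_nhds hε)] with k hk z hz
    have hq := quad_est (f := f) (c := z) (z := z + (h k : ℂ) • v) hR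
      (hf.mono ((hbs z hz).trans hcs)) (fun w hw => hM w (hbs z hz hw)) (hmem k z hz)
    rw [add_sub_cancel_left, map_smul, norm_smul, Complex.norm_real,
      Real.norm_of_nonneg (hpos k).le] at hq
    have hne : (h k : ℂ) ≠ 0 := by exact_mod_cast (hpos k).ne'
    rw [dist_comm, dist_eq_norm]
    have : (h k : ℂ)⁻¹ * (f (z + (h k : ℂ) • v) - f z) - fderiv ℂ f z v
        = (h k : ℂ)⁻¹ * (f (z + (h k : ℂ) • v) - f z - (h k : ℂ) • fderiv ℂ f z v) := by
      rw [smul_eq_mul]; field_simp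
    rw [this, norm_mul, norm_inv, Complex.norm_real, Real.norm_of_nonneg (hpos k).le]
    refine lt_of_le_of_lt ?_ hk
    have hp := hpos k
    calc (h k)⁻¹ * ‖f (z + (h k : ℂ) • v) - f z - (h k : ℂ) • fderiv ℂ f z v‖
        ≤ (h k)⁻¹ * (4 * M * (h k * ‖v‖ / R) ^ 2) := by gcongr
      _ = _ := by field_simp
  · intro k
    refine DifferentiableOn.const_mul (DifferentiableOn.sub ?_ ?_) _
    · refine hf.comp (differentiable_id.add_const _).differentiableOn ?_
      intro z hz
      exact hcs (hbs z hz (hmem k z hz))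
    · exact hf.mono fun z hz => hcs (hbs z hz (Metric.mem_ball_self hR))

end PartOne


section PartTwo

lemma exists_big_ball {B : Set ℂ} (hB : IsCompact B) (hBp : ∀ w ∈ B, 0 < w.re) :
    ∃ T r : ℝ, 0 < r ∧ r < T ∧ B ⊆ Metric.ball (T : ℂ) r := by
  rcases B.eq_empty_or_nonempty with rfl | hne
  · exact ⟨2, 1, by norm_num, by norm_num, by simp⟩
  obtain ⟨w0, hw0, hmin⟩ := hB.exists_isMinOn hne Complex.continuous_re.continuousOn
  obtain ⟨R, hR⟩ := hB.isBounded.exists_norm_le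
  set δ := w0.re with hδ
  have hδ0 : 0 < δ := hBp w0 hw0
  have hR0 : δ ≤ R := (Complex.re_le_norm w0).trans (hR w0 hw0)
  refine ⟨(R ^ 2 + 1) / δ, (R ^ 2 + 1) / δ - δ / 2, ?_, by linarith, ?_⟩
  · rw [sub_pos, lt_div_iff₀ hδ0]; nlinarith
  · intro w hw
    set T := (R ^ 2 + 1) / δ with hT
    have hTδ : T * δ = R ^ 2 + 1 := by rw [hT]; field_simp
    have hTpos : 0 < T := by rw [hT]; positivity
    have hrpos : 0 < T - δ / 2 := by
      rw [hT, sub_pos, lt_div_iff₀ hδ0]; nlinarith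
    rw [Metric.mem_ball, dist_eq_norm]
    refine lt_of_pow_lt_pow_left₀ 2 hrpos.le ?_
    rw [← Complex.normSq_eq_norm_sq, Complex.normSq_apply]
    have h1 : w.re * w.re + w.im * w.im ≤ R ^ 2 := by
      rw [← Complex.normSq_apply, Complex.normSq_eq_norm_sq]
      exact pow_le_pow_left₀ (norm_nonneg _) (hR w hw) 2
    have h2 : δ ≤ w.re := hmin hw
    simp only [Complex.sub_re, Complex.ofReal_re, Complex.sub_im, Complex.ofReal_im, sub_zero]
    nlinarith

lemma runge_sep {A B : Set ℂ} (hA : IsCompact A) (hB : IsCompact B) (hAn : ∀ w ∈ A, w.re < 0)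
    (hBp : ∀ w ∈ B, 0 < w.re) {ε : ℝ} (hε : 0 < ε) :
    ∃ q : Polynomial ℂ, (∀ w ∈ A, ‖q.eval w‖ < ε) ∧ (∀ w ∈ B, ‖q.eval w - 1‖ < ε) := by
  obtain ⟨T, r, hr, hrT, hBT⟩ := exists_big_ball hB hBp
  set X : Set ℂ := A ∪ B with hX
  have : CompactSpace X := isCompact_iff_compactSpace.1 (hA.union hB)
  let S : Subalgebra ℂ C(X, ℂ) := (polynomialFunctions X).topologicalClosure
  have hScl : IsClosed (S : Set C(X, ℂ)) := Subalgebra.isClosed_topologicalClosure _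
  have : CompleteSpace S := hScl.completeSpace_coe
  let x : S := ⟨Polynomial.toContinuousMapOnAlgHom X Polynomial.X,
    Subalgebra.le_topologicalClosure _ ⟨Polynomial.X, trivial, rfl⟩⟩
  have hxv : ∀ w : X, (x : C(X, ℂ)) w = w := by intro w; simp [x]
  have hspec : spectrum ℂ (x : C(X, ℂ)) = X := by
    rw [ContinuousMap.spectrum_eq_range]
    ext w
    constructor
    · rintro ⟨y, rfl⟩; rw [hxv]; exact y.2
    · intro hw; exact ⟨⟨w, hw⟩, hxv _⟩
  have hcirc : ∀ a ∈ Metric.sphere (T : ℂ) r, a ∈ resolventSet ℂ x := by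
    intro a ha
    by_contra hcon
    have hmem : a ∈ spectrum ℂ x := hcon
    have hbd := Subalgebra.spectrum_isBounded_connectedComponentIn S x hmem
    rw [hspec] at hbd
    have ha' : (a.re - T) ^ 2 + a.im ^ 2 = r ^ 2 := by
      rw [mem_sphere_iff_norm] at ha
      rw [← ha, ← Complex.normSq_eq_norm_sq, Complex.normSq_apply]
      simp; ring
    have hare : 0 < a.re := by
      by_contra hneg
      push Not at hneg
      nlinarith [sq_nonneg a.im]
    obtain ⟨c, hc1, hcim⟩ : ∃ c : ℝ, c ^ 2 = 1 ∧ 0 ≤ c * a.im := by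
      rcases le_total 0 a.im with h | h
      · exact ⟨1, by norm_num, by linarith⟩
      · exact ⟨-1, by norm_num, by linarith⟩
    set ray : ℝ → ℂ := fun t => ⟨a.re, a.im + c * t⟩ with hray
    have hrayc : Continuous ray := by
      have : ray = fun t : ℝ => (a.re : ℂ) + ((a.im + c * t : ℝ) : ℂ) * Complex.I := by
        ext t
        apply Complex.ext <;> simp [hray]
      rw [this]; fun_prop
    have hpre : IsPreconnected (ray '' Ici 0) := isPreconnected_Ici.image _ hrayc.continuousOn
    have hsub : ray '' Ici 0 ⊆ Xᶜ := by
      rintro _ ⟨t, ht, rfl⟩ hmem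
      have ht : 0 ≤ t := ht
      rcases hmem with h | h
      · have := hAn _ h
        simp only [hray] at this
        linarith
      · have := hBT h
        rw [Metric.mem_ball, dist_eq_norm] at this
        have h3 : ‖ray t - T‖ ^ 2 < r ^ 2 := pow_lt_pow_left₀ this (norm_nonneg _) (by norm_num)
        rw [← Complex.normSq_eq_norm_sq, Complex.normSq_apply] at h3
        simp only [hray, Complex.sub_re, Complex.ofReal_re, Complex.sub_im, Complex.ofReal_im,
          sub_zero] at h3
        nlinarith [mul_nonneg hcim ht, sq_nonneg t, mul_nonneg (sq_nonneg c) (sq_nonneg t)]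
    have ha0 : a ∈ ray '' Ici 0 := ⟨0, by simp, by simp [hray]⟩
    obtain ⟨M, hM⟩ := (hbd.subset (hpre.subset_connectedComponentIn ha0 hsub)).exists_norm_le
    have h4 := hM (ray (|M| + |a.im| + 1)) ⟨_, by simp only [mem_Ici]; positivity, rfl⟩
    have h5 := (Complex.abs_im_le_norm _).trans h4
    simp only [hray] at h5
    have h6 : |c| = 1 := by
      rw [← sq_abs] at hc1
      nlinarith [abs_nonneg c]
    have h7 : |c * (|M| + |a.im| + 1)| = |M| + |a.im| + 1 := by
      rw [abs_mul, h6, one_mul, abs_of_nonneg (by positivity)]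
    have h8 := abs_sub_abs_le_abs_sub (c * (|M| + |a.im| + 1)) (-a.im)
    rw [h7, abs_neg, sub_neg_eq_add, add_comm _ a.im] at h8
    linarith [le_abs_self M]
  have hcont : ContinuousOn (fun a => resolvent x a) (Metric.sphere (T : ℂ) r) := by
    intro a ha
    exact (spectrum.hasDerivAt_resolvent_const_left (hcirc a ha)).continuousAt.continuousWithinAt
  set g : S := (2 * Real.pi * Complex.I : ℂ)⁻¹ • ∮ a in C((T : ℂ), r), resolvent x a with hg
  have hev : ∀ w : X, (g : C(X, ℂ)) w = (2 * Real.pi * Complex.I : ℂ)⁻¹ *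
      ∮ a in C((T : ℂ), r), (a - (w : ℂ))⁻¹ := by
    intro w
    let φ : S →L[ℂ] ℂ := (ContinuousMap.evalCLM ℂ w).comp S.toSubmodule.subtypeL
    have h1 : (g : C(X, ℂ)) w = φ g := rfl
    rw [h1, hg, map_smul, smul_eq_mul]
    congr 1
    unfold circleIntegral
    rw [← ContinuousLinearMap.intervalIntegral_comp_comm]
    · apply intervalIntegral.integral_congr
      intro θ hθ
      simp only [map_smul]
      congr 1
      set a := circleMap (T : ℂ) r θ with ha
      have hu : IsUnit (algebraMap ℂ S a - x) := hcirc a (circleMap_mem_sphere _ hr.le _)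
      have h2 : (algebraMap ℂ S a - x) * resolvent x a = 1 := Ring.mul_inverse_cancel _ hu
      have h3 : (a - (w : ℂ)) * φ (resolvent x a) = 1 := by
        have h4 := congrArg (fun y : S => (y : C(X, ℂ)) w) h2
        simp only [MulMemClass.coe_mul, AddSubgroupClass.coe_sub, ContinuousMap.mul_apply,
          ContinuousMap.sub_apply, hxv] at h4
        exact h4
      exact eq_inv_of_mul_eq_one_right h3
    · have := (hcont.circleIntegrable hr.le).out
      exact this
  have hgA : ∀ w : X, (w : ℂ) ∈ A → (g : C(X, ℂ)) w = 0 := by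
    intro w hw
    rw [hev]
    have : ∮ a in C((T : ℂ), r), (a - (w : ℂ))⁻¹ = 0 := by
      have hne : ∀ a ∈ Metric.closedBall (T : ℂ) r, a - (w : ℂ) ≠ 0 := by
        intro a ha h0
        rw [sub_eq_zero] at h0
        subst h0
        rw [Metric.mem_closedBall, dist_eq_norm] at ha
        have h1 := hAn _ hw
        have h2 := (Complex.abs_re_le_norm ((w : ℂ) - T)).trans ha
        rw [abs_le] at h2
        simp at h2
        linarith
      refine Complex.circleIntegral_eq_zero_of_differentiable_on_off_countable hr.le
        countable_empty ?_ ?_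
      · exact ContinuousOn.inv₀ (by fun_prop) hne
      · intro z hz
        exact ((differentiableAt_id).sub_const _).inv (hne z (Metric.ball_subset_closedBall hz.1))
    rw [this, mul_zero]
  have hgB : ∀ w : X, (w : ℂ) ∈ B → (g : C(X, ℂ)) w = 1 := by
    intro w hw
    rw [hev, circleIntegral.integral_sub_inv_of_mem_ball (hBT hw)]
    have := Complex.two_pi_I_ne_zero
    field_simp
  have hgS : (g : C(X, ℂ)) ∈ closure (polynomialFunctions X : Set C(X, ℂ)) := g.2
  obtain ⟨p, hp, hpd⟩ := Metric.mem_closure_iff.1 hgS ε hε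
  obtain ⟨q, -, rfl⟩ := hp
  have hq : ∀ w : X, ‖(g : C(X, ℂ)) w - q.eval (w : ℂ)‖ < ε := by
    intro w
    have := (ContinuousMap.dist_apply_le_dist w).trans_lt hpd
    rw [dist_eq_norm] at this
    simpa using this
  refine ⟨q, fun w hw => ?_, fun w hw => ?_⟩
  · have := hq ⟨w, Or.inl hw⟩
    rw [hgA _ hw] at this
    simpa using this
  · have := hq ⟨w, Or.inr hw⟩
    rw [hgB _ hw, norm_sub_rev] at this
    exact this

end PartTwo


noncomputable section PartThree

variable {n : ℕ}

def Vset (Ω L : Set (Fin n → ℂ)) (ζ : Fin n → ℂ) : Set ℂ := {r | ∀ z ∈ L, ζ + r • (z - ζ) ∈ Ω}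

open Classical in
def Ffam (L : Set (Fin n → ℂ)) (ζ : Fin n → ℂ) (f : (Fin n → ℂ) → ℂ) : ℂ → C(L, ℂ) := fun r =>
  if h : Continuous (fun z : L => f (ζ + r • ((z : Fin n → ℂ) - ζ))) then ⟨_, h⟩ else 0

lemma Ffam_apply {Ω L : Set (Fin n → ℂ)} {ζ : Fin n → ℂ} {f : (Fin n → ℂ) → ℂ}
    (hf : ContinuousOn f Ω) {r : ℂ} (hr : r ∈ Vset Ω L ζ) (z : L) :
    Ffam L ζ f r z = f (ζ + r • ((z : Fin n → ℂ) - ζ)) := by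
  have h : Continuous (fun z : L => f (ζ + r • ((z : Fin n → ℂ) - ζ))) := by
    refine hf.comp_continuous (by fun_prop) (fun z => hr z z.2)
  simp only [Ffam, h, dif_pos, ContinuousMap.coe_mk]

def ccoord (L : Set (Fin n → ℂ)) (ζ : Fin n → ℂ) (i : Fin n) : C(L, ℂ) :=
  ⟨fun z => (z : Fin n → ℂ) i - ζ i,
    ((continuous_apply i).comp continuous_subtype_val).sub continuous_const⟩

lemma fderiv_eq_sum (f : (Fin n → ℂ) → ℂ) (w v : Fin n → ℂ) :
    fderiv ℂ f w v = ∑ i, v i * fderiv ℂ f w (Pi.single i 1) := by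
  conv_lhs => rw [pi_eq_sum_univ' v]
  rw [map_sum]
  refine Finset.sum_congr rfl fun i _ => ?_
  rw [map_smul, smul_eq_mul]

lemma Ffam_local {Ω L : Set (Fin n → ℂ)} (hΩ : IsOpen Ω) (hL : IsCompact L) {ζ : Fin n → ℂ}
    {r : ℂ} (hr : r ∈ Vset Ω L ζ) {f : (Fin n → ℂ) → ℂ} (hf : DifferentiableOn ℂ f Ω) :
    ∃ ρ > 0, ∃ B > 0, ∃ M, (∀ z ∈ L, ‖z - ζ‖ ≤ B) ∧
      ∀ z ∈ L, Metric.ball (ζ + r • (z - ζ)) ρ ⊆ Ω ∧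
        ∀ w ∈ Metric.ball (ζ + r • (z - ζ)) ρ, ‖f w‖ ≤ M := by
  have hc : IsCompact ((fun z => ζ + r • (z - ζ)) '' L) := hL.image (by fun_prop)
  have hsub : ((fun z => ζ + r • (z - ζ)) '' L) ⊆ Ω := by
    rintro _ ⟨z, hz, rfl⟩; exact hr z hz
  obtain ⟨ρ, hρ, hρΩ⟩ := hc.exists_cthickening_subset_open hΩ hsub
  obtain ⟨M, hM⟩ := (hc.cthickening (r := ρ)).exists_bound_of_continuousOn
    (hf.continuousOn.mono hρΩ)
  obtain ⟨B, hB⟩ := hL.exists_bound_of_continuousOn (f := fun z => z - ζ) (by fun_prop)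
  have hbt : ∀ z ∈ L, Metric.ball (ζ + r • (z - ζ)) ρ ⊆
      Metric.cthickening ρ ((fun z => ζ + r • (z - ζ)) '' L) := fun z hz =>
    Metric.ball_subset_closedBall.trans (Metric.closedBall_subset_cthickening
      (Set.mem_image_of_mem (fun z => ζ + r • (z - ζ)) hz) ρ)
  refine ⟨ρ, hρ, max B 1, by positivity, M, fun z hz => (hB z hz).trans (le_max_left _ _),
    fun z hz => ⟨(hbt z hz).trans hρΩ, fun w hw => hM w (hbt z hz hw)⟩⟩

lemma Vset_isOpen {Ω L : Set (Fin n → ℂ)} (hΩ : IsOpen Ω) (hL : IsCompact L) (ζ : Fin n → ℂ) :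
    IsOpen (Vset Ω L ζ) := by
  rw [Metric.isOpen_iff]
  intro r hr
  obtain ⟨ρ, hρ, B, hB, M, h1, h2⟩ := Ffam_local hΩ hL hr (f := fun _ => 0)
    (differentiableOn_const _)
  refine ⟨ρ / B, by positivity, fun s hs z hz => (h2 z hz).1 ?_⟩
  rw [Metric.mem_ball, dist_eq_norm] at hs ⊢
  have : ζ + s • (z - ζ) - (ζ + r • (z - ζ)) = (s - r) • (z - ζ) := by
    rw [sub_smul]; abel
  rw [this, norm_smul]
  calc ‖s - r‖ * ‖z - ζ‖ ≤ ‖s - r‖ * B := by gcongr; exact h1 z hz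
    _ < ρ := by rwa [← lt_div_iff₀ hB]

lemma Vset_convex {Ω L : Set (Fin n → ℂ)} (hΩ : Convex ℝ Ω) (ζ : Fin n → ℂ) :
    Convex ℝ (Vset Ω L ζ) := by
  intro r hr s hs a b ha hb hab z hz
  have := hΩ (hr z hz) (hs z hz) ha hb hab
  convert this using 1
  ext i
  have hab' : (a : ℂ) + b = 1 := by exact_mod_cast hab
  simp only [Pi.add_apply, Pi.smul_apply, smul_eq_mul, Complex.real_smul, Pi.sub_apply]
  linear_combination (-ζ i) * hab'

lemma Ffam_hasDerivAt {Ω L : Set (Fin n → ℂ)} (hΩ : IsOpen Ω) (hL : IsCompact L)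
    [CompactSpace L] {ζ : Fin n → ℂ}
    {r : ℂ} (hr : r ∈ Vset Ω L ζ) {f : (Fin n → ℂ) → ℂ} (hf : DifferentiableOn ℂ f Ω) :
    HasDerivAt (Ffam L ζ f)
      (∑ i, ccoord L ζ i * Ffam L ζ (fun z => fderiv ℂ f z (Pi.single i 1)) r) r := by
  obtain ⟨ρ, hρ, B, hB, M, h1, h2⟩ := Ffam_local hΩ hL hr hf
  rw [hasDerivAt_iff_isLittleO_nhds_zero]
  have hO : (fun h : ℂ => Ffam L ζ f (r + h) - Ffam L ζ f r -
      h • ∑ i, ccoord L ζ i * Ffam L ζ (fun z => fderiv ℂ f z (Pi.single i 1)) r)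
      =O[𝓝 0] fun h => h ^ 2 := by
    refine Asymptotics.IsBigO.of_bound (4 * |M| * (B / ρ) ^ 2) ?_
    have hV : ∀ᶠ h : ℂ in 𝓝 0, r + h ∈ Vset Ω L ζ := by
      have : Tendsto (fun h : ℂ => r + h) (𝓝 0) (𝓝 r) := by
        have hc : Continuous fun h : ℂ => r + h := by fun_prop
        have h3 := hc.tendsto 0
        simpa only [add_zero] using h3
      exact this ((Vset_isOpen hΩ hL ζ).mem_nhds hr)
    filter_upwards [hV, Metric.ball_mem_nhds (0 : ℂ) (show 0 < ρ / B by positivity)] with h hh hb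
    rw [ContinuousMap.norm_le _ (by positivity)]
    intro z
    have hz := h2 z z.2
    set w := ζ + r • ((z : Fin n → ℂ) - ζ) with hw
    have hw' : ζ + (r + h) • ((z : Fin n → ℂ) - ζ) = w + h • ((z : Fin n → ℂ) - ζ) := by
      rw [hw, add_smul]; abel
    have hzB : ‖h • ((z : Fin n → ℂ) - ζ)‖ ≤ ‖h‖ * B := by
      rw [norm_smul]; gcongr; exact h1 z z.2
    have hmem : w + h • ((z : Fin n → ℂ) - ζ) ∈ Metric.ball w ρ := by
      rw [Metric.mem_ball, dist_eq_norm, add_sub_cancel_left]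
      refine hzB.trans_lt ?_
      rw [← lt_div_iff₀ hB]
      simpa using hb
    have hq := quad_est hρ (hf.mono hz.1) (fun u hu => (hz.2 u hu).trans (le_abs_self M)) hmem
    have hval : (Ffam L ζ f (r + h) - Ffam L ζ f r -
      h • ∑ i, ccoord L ζ i * Ffam L ζ (fun z => fderiv ℂ f z (Pi.single i 1)) r) z
      = f (w + h • ((z : Fin n → ℂ) - ζ)) - f w
        - fderiv ℂ f w (w + h • ((z : Fin n → ℂ) - ζ) - w) := by
      rw [add_sub_cancel_left, map_smul, fderiv_eq_sum f w]
      simp only [ContinuousMap.sub_apply, ContinuousMap.smul_apply, ContinuousMap.sum_apply,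
        ContinuousMap.mul_apply]
      rw [Ffam_apply hf.continuousOn hh, Ffam_apply hf.continuousOn hr, hw']
      congr 2
      refine Finset.sum_congr rfl fun i _ => ?_
      rw [Ffam_apply (fderiv_apply_differentiableOn hΩ hf _).continuousOn hr]
      rfl
    rw [hval]
    refine hq.trans ?_
    rw [add_sub_cancel_left, norm_pow, mul_assoc (4 * |M|), ← mul_pow]
    gcongr
    calc ‖h • ((z : Fin n → ℂ) - ζ)‖ / ρ ≤ ‖h‖ * B / ρ := by gcongr
      _ = _ := by ring
  refine hO.trans_isLittleO ?_
  exact Asymptotics.isLittleO_pow_id (by norm_num)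

def polyAlg (L : Set (Fin n → ℂ)) (ζ : Fin n → ℂ) : Subalgebra ℂ C(L, ℂ) :=
  (MvPolynomial.aeval (R := ℂ) (ccoord L ζ)).range

lemma Ffam_analyticAt {Ω L : Set (Fin n → ℂ)} (hΩ : IsOpen Ω) (hL : IsCompact L)
    [CompactSpace L] {ζ : Fin n → ℂ}
    {r : ℂ} (hr : r ∈ Vset Ω L ζ) {f : (Fin n → ℂ) → ℂ} (hf : DifferentiableOn ℂ f Ω) :
    AnalyticAt ℂ (Ffam L ζ f) r := by
  have : DifferentiableOn ℂ (Ffam L ζ f) (Vset Ω L ζ) := fun s hs =>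
    (Ffam_hasDerivAt hΩ hL hs hf).differentiableAt.differentiableWithinAt
  exact this.analyticAt ((Vset_isOpen hΩ hL ζ).mem_nhds hr)

lemma iteratedDeriv_Ffam {Ω L : Set (Fin n → ℂ)} (hΩ : IsOpen Ω) (hL : IsCompact L)
    [CompactSpace L] {ζ : Fin n → ℂ} (hζ : ζ ∈ Ω) (k : ℕ) : ∀ {f : (Fin n → ℂ) → ℂ}, 
    DifferentiableOn ℂ f Ω → iteratedDeriv k (Ffam L ζ f) 0 ∈ polyAlg L ζ := by
  have h0 : (0 : ℂ) ∈ Vset Ω L ζ := by intro z _; simpa using hζ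
  induction k with
  | zero =>
    intro f hf
    rw [iteratedDeriv_zero]
    have : Ffam L ζ f 0 = algebraMap ℂ C(L, ℂ) (f ζ) := by
      ext z
      rw [Ffam_apply hf.continuousOn h0]
      simp
    rw [this]
    exact Subalgebra.algebraMap_mem _ _
  | succ k ih =>
    intro f hf
    rw [iteratedDeriv_succ']
    have hev : deriv (Ffam L ζ f) =ᶠ[𝓝 0] fun r =>
        ∑ i, ccoord L ζ i * Ffam L ζ (fun z => fderiv ℂ f z (Pi.single i 1)) r := by
      filter_upwards [(Vset_isOpen hΩ hL ζ).mem_nhds h0] with r hr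
      exact (Ffam_hasDerivAt hΩ hL hr hf).deriv
    have hcd : ∀ i, ContDiffAt ℂ k (Ffam L ζ (fun z => fderiv ℂ f z (Pi.single i 1))) 0 :=
      fun i => (Ffam_analyticAt hΩ hL h0 (fderiv_apply_differentiableOn hΩ hf _)).contDiffAt
    rw [hev.iteratedDeriv_eq, iteratedDeriv_fun_sum]
    · refine Subalgebra.sum_mem _ fun i _ => ?_
      rw [iteratedDeriv_const_mul _ (hcd i)]
      refine Subalgebra.mul_mem _ ?_ (ih (fderiv_apply_differentiableOn hΩ hf _))
      exact ⟨MvPolynomial.X i, by simp⟩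
    · intro i _
      exact contDiffAt_const.mul (hcd i)

lemma poly_dense {Ω L : Set (Fin n → ℂ)} (hΩ : IsOpen Ω) (hΩc : Convex ℝ Ω) (hL : IsCompact L)
    (hLΩ : L ⊆ Ω) {ζ : Fin n → ℂ} (hζ : ζ ∈ Ω) {f : (Fin n → ℂ) → ℂ}
    (hf : DifferentiableOn ℂ f Ω) {ε : ℝ} (hε : 0 < ε) :
    ∃ P : MvPolynomial (Fin n) ℂ, ∀ z ∈ L, ‖f z - MvPolynomial.eval z P‖ < ε := by
  have : CompactSpace L := isCompact_iff_compactSpace.1 hL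
  have h0 : (0 : ℂ) ∈ Vset Ω L ζ := by intro z _; simpa using hζ
  have h1 : (1 : ℂ) ∈ Vset Ω L ζ := by intro z hz; simpa using hLΩ hz
  let S : Submodule ℂ C(L, ℂ) := (polyAlg L ζ).toSubmodule.topologicalClosure
  have hS : IsClosed (S : Set C(L, ℂ)) := Submodule.isClosed_topologicalClosure _
  have hmem : ∀ x ∈ polyAlg L ζ, x ∈ S := fun x hx => Submodule.le_topologicalClosure _ hx
  obtain ⟨δ, hδ, hδV⟩ := Metric.isOpen_iff.1 (Vset_isOpen hΩ hL ζ) 0 h0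
  have hdiff : DifferentiableOn ℂ (Ffam L ζ f) (Metric.ball 0 δ) := fun s hs =>
    (Ffam_hasDerivAt hΩ hL (hδV hs) hf).differentiableAt.differentiableWithinAt
  have hball : ∀ r ∈ Metric.ball (0 : ℂ) δ, Ffam L ζ f r ∈ S := by
    intro r hr
    have hs := Complex.hasSum_taylorSeries_on_ball hdiff hr
    refine hS.mem_of_tendsto hs (Eventually.of_forall fun t => ?_)
    refine Submodule.sum_mem _ fun k _ => ?_
    exact S.smul_mem _ (S.smul_mem _ (hmem _ (iteratedDeriv_Ffam hΩ hL hζ k hf)))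
  have hG : AnalyticOnNhd ℂ (fun r => S.mkQL (Ffam L ζ f r)) (Vset Ω L ζ) := by
    intro r hr
    exact (S.mkQL.analyticAt _).comp (Ffam_analyticAt hΩ hL hr hf)
  have hz := hG.eqOn_zero_of_preconnected_of_eventuallyEq_zero (Vset_convex hΩc ζ).isPreconnected h0
    (by
      filter_upwards [Metric.ball_mem_nhds (0 : ℂ) hδ] with r hr
      exact (Submodule.Quotient.mk_eq_zero S).2 (hball r hr)) h1
  have hS1 : Ffam L ζ f 1 ∈ S := (Submodule.Quotient.mk_eq_zero S).1 hz
  have hcl : Ffam L ζ f 1 ∈ closure (polyAlg L ζ : Set C(L, ℂ)) := hS1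
  obtain ⟨p, ⟨P, rfl⟩, hP⟩ := Metric.mem_closure_iff.1 hcl ε hε
  refine ⟨MvPolynomial.aeval (fun i => MvPolynomial.X i - MvPolynomial.C (ζ i)) P, fun z hz => ?_⟩
  have := (ContinuousMap.dist_apply_le_dist (⟨z, hz⟩ : L)).trans_lt hP
  rw [dist_eq_norm, Ffam_apply hf.continuousOn h1] at this
  have e1 : f (ζ + (1 : ℂ) • (((⟨z, hz⟩ : L) : Fin n → ℂ) - ζ)) = f z := by
    congr 1
    rw [one_smul]
    exact add_sub_cancel ζ z
  have e2 : ∀ R : MvPolynomial (Fin n) ℂ,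
      (MvPolynomial.aeval (R := ℂ) (ccoord L ζ) R : C(L, ℂ)) ⟨z, hz⟩ =
      MvPolynomial.eval z (MvPolynomial.aeval (fun i => MvPolynomial.X i - MvPolynomial.C (ζ i)) R)
      := by
    intro R
    induction R using MvPolynomial.induction_on with
    | C a => simp
    | add p q hp hq => rw [map_add, map_add, map_add, ContinuousMap.add_apply, hp, hq]
    | mul_X p i hp =>
      rw [map_mul, map_mul, map_mul, ContinuousMap.mul_apply, hp]
      simp [ccoord]
  rw [e1] at this
  rw [← e2]
  exact this
end PartThree


noncomputable section PartFour

variable {n : ℕ}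

lemma shift_pd_aux (ζ : Fin n → ℂ) (i : Fin n) (R : MvPolynomial (Fin n) ℂ) (z : Fin n → ℂ) :
    DifferentiableAt ℂ (fun z => MvPolynomial.eval (z - ζ) R) z ∧
    fderiv ℂ (fun z => MvPolynomial.eval (z - ζ) R) z (Pi.single i 1) =
      MvPolynomial.eval (z - ζ) (MvPolynomial.pderiv i R) := by
  induction R using MvPolynomial.induction_on with
  | C a => simp
  | add p q hp hq =>
    simp only [map_add]
    refine ⟨hp.1.add hq.1, ?_⟩
    rw [fderiv_fun_add hp.1 hq.1, ← hp.2, ← hq.2]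
    rfl
  | mul_X p j hp =>
    simp only [map_mul, MvPolynomial.eval_X]
    have hX : HasFDerivAt (fun z : Fin n → ℂ => (z - ζ) j)
        (ContinuousLinearMap.proj (R := ℂ) (φ := fun _ : Fin n => ℂ) j) z := by
      exact ((ContinuousLinearMap.proj (R := ℂ) (φ := fun _ : Fin n => ℂ) j).hasFDerivAt).sub_const (ζ j)
    refine ⟨hp.1.mul hX.differentiableAt, ?_⟩
    rw [fderiv_fun_mul hp.1 hX.differentiableAt, hX.fderiv, Derivation.leibniz]
    simp only [ContinuousLinearMap.add_apply, ContinuousLinearMap.smul_apply, hp.2,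
      ContinuousLinearMap.proj_apply, map_add, smul_eq_mul, map_mul, MvPolynomial.pderiv_X,
      MvPolynomial.eval_X]
    by_cases h : i = j
    · subst h; simp
    · simp [h, Pi.single_apply, Ne.symm h]

lemma shift_pd (ζ : Fin n → ℂ) (i : Fin n) (R : MvPolynomial (Fin n) ℂ) :
    pd i (fun z => MvPolynomial.eval (z - ζ) R) =
      fun z => MvPolynomial.eval (z - ζ) (MvPolynomial.pderiv i R) :=
  funext fun z => (shift_pd_aux ζ i R z).2

lemma shift_pd_iter (ζ : Fin n → ℂ) (i : Fin n) (k : ℕ) (R : MvPolynomial (Fin n) ℂ) :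
    (pd i)^[k] (fun z => MvPolynomial.eval (z - ζ) R) =
      fun z => MvPolynomial.eval (z - ζ) ((MvPolynomial.pderiv i)^[k] R) := by
  induction k generalizing R with
  | zero => rfl
  | succ k ih => rw [Function.iterate_succ_apply, Function.iterate_succ_apply, shift_pd, ih]

lemma shift_foldr (ζ : Fin n → ℂ) (ℓ : Fin n → ℕ) (l : List (Fin n)) (R : MvPolynomial (Fin n) ℂ) :
    l.foldr (fun i g => (pd i)^[ℓ i] g) (fun z => MvPolynomial.eval (z - ζ) R) =
      fun z => MvPolynomial.eval (z - ζ)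
        (l.foldr (fun i g => (MvPolynomial.pderiv i)^[ℓ i] g) R) := by
  induction l with
  | nil => rfl
  | cons a l ih => rw [List.foldr_cons, List.foldr_cons, ih, shift_pd_iter]

lemma coeff_pderiv' (i : Fin n) (R : MvPolynomial (Fin n) ℂ) (m : Fin n →₀ ℕ) :
    (MvPolynomial.pderiv i R).coeff m = R.coeff (m + Finsupp.single i 1) * (m i + 1) := by
  induction R using MvPolynomial.induction_on' with
  | monomial u a =>
    rw [MvPolynomial.pderiv_monomial, MvPolynomial.coeff_monomial, MvPolynomial.coeff_monomial]
    by_cases h : u = m + Finsupp.single i 1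
    · subst h; simp
    · rw [if_neg h]
      split_ifs with h2
      · have : u i = 0 := by
          by_contra h0
          apply h
          rw [← h2]
          ext j
          by_cases hj : i = j
          · subst hj
            simp
            omega
          · simp [Finsupp.single_apply, hj]
        simp [this]
      · simp
  | add p q hp hq => rw [map_add, MvPolynomial.coeff_add, MvPolynomial.coeff_add, hp, hq]; ring

lemma coeff_pderiv_iter (i : Fin n) (k : ℕ) (R : MvPolynomial (Fin n) ℂ) (m : Fin n →₀ ℕ)
    (hm : m i = 0) :
    ((MvPolynomial.pderiv i)^[k] R).coeff m = R.coeff (m + Finsupp.single i k) * k.factorial := by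
  induction k generalizing R with
  | zero => simp
  | succ k ih =>
    rw [Function.iterate_succ_apply, ih, coeff_pderiv', add_assoc, ← Finsupp.single_add,
      Nat.factorial_succ]
    simp [hm]
    ring

lemma coeff_foldr (ℓ : Fin n → ℕ) (l : List (Fin n)) (hl : l.Nodup) (R : MvPolynomial (Fin n) ℂ) :
    ∀ m : Fin n →₀ ℕ, (∀ i ∈ l, m i = 0) →
    (l.foldr (fun i g => (MvPolynomial.pderiv i)^[ℓ i] g) R).coeff m =
      R.coeff (m + (l.map fun i => Finsupp.single i (ℓ i)).sum)
        * ((l.map fun i => (ℓ i).factorial).prod : ℕ) := by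
  induction l with
  | nil => intro m _; simp
  | cons a l ih =>
    intro m hm
    rw [List.nodup_cons] at hl
    rw [List.foldr_cons, coeff_pderiv_iter _ _ _ _ (hm a (by simp)), ih hl.2]
    · simp only [List.map_cons, List.sum_cons, List.prod_cons, add_assoc]
      push_cast; ring
    · intro i hi
      have : a ≠ i := fun h => hl.1 (h ▸ hi)
      simp [hm i (by simp [hi]), Finsupp.single_apply, this]

lemma Dml_poly (ζ : Fin n → ℂ) (ℓ : Fin n → ℕ) (R : MvPolynomial (Fin n) ℂ) :
    Dml ℓ (fun z => MvPolynomial.eval (z - ζ) R) ζ =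
      R.coeff (Finsupp.equivFunOnFinite.symm ℓ) * ((∏ i, (ℓ i).factorial : ℕ) : ℂ) := by
  rw [Dml, shift_foldr]
  simp only [sub_self]
  have h0 : ∀ S : MvPolynomial (Fin n) ℂ, MvPolynomial.eval 0 S = S.coeff 0 := fun S => by
    rw [MvPolynomial.eval_zero]; rfl
  rw [h0, coeff_foldr ℓ _ (List.nodup_finRange n) R 0 (by simp)]
  congr 2
  · rw [zero_add]
    ext j
    rw [← List.ofFn_eq_map, List.sum_ofFn]
    simp [Finsupp.single_apply]

lemma pSum_poly (Nj : ℕ → Fin n → ℕ) (hNj : Function.Bijective Nj) (ζ : Fin n → ℂ)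
    (Q : MvPolynomial (Fin n) ℂ) :
    ∃ Λ, ∀ lam ≥ Λ, pSum Nj (mvEval Q) ζ lam = mvEval Q := by
  let R : MvPolynomial (Fin n) ℂ :=
    MvPolynomial.aeval (fun i => MvPolynomial.X i + MvPolynomial.C (ζ i)) Q
  have hR : mvEval Q = fun z => MvPolynomial.eval (z - ζ) R := by
    funext z
    show MvPolynomial.eval z Q = MvPolynomial.eval (z - ζ) (MvPolynomial.aeval _ Q)
    induction Q using MvPolynomial.induction_on with
    | C a => simp
    | add p q hp hq => rw [map_add, map_add, map_add, hp, hq]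
    | mul_X p i hp => rw [map_mul, map_mul, map_mul, hp]; simp
  let e := Equiv.ofBijective Nj hNj
  obtain ⟨Λ, hΛ⟩ : ∃ Λ, ∀ d ∈ R.support, e.symm (⇑d) ≤ Λ := by
    refine ⟨R.support.sup fun d => e.symm (⇑d), fun d hd => ?_⟩
    exact Finset.le_sup (f := fun d : Fin n →₀ ℕ => e.symm (⇑d)) hd
  refine ⟨Λ, fun lam hlam => ?_⟩
  rw [hR]
  funext z
  simp only [pSum, pSumExt, Dml_poly]
  rw [MvPolynomial.eval_eq']
  symm
  have hne : ∀ ℓ : Fin n → ℕ, ((∏ i, (ℓ i).factorial : ℕ) : ℂ) ≠ 0 := fun ℓ => by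
    exact_mod_cast Finset.prod_ne_zero_iff.2 fun i _ => Nat.factorial_ne_zero _
  have : ∀ j, (((∏ i, Nat.factorial (Nj j i) : ℕ) : ℂ))⁻¹ *
      (R.coeff (Finsupp.equivFunOnFinite.symm (Nj j)) * ((∏ i, Nat.factorial (Nj j i) : ℕ) : ℂ)) *
      ∏ i, (z i - ζ i) ^ (Nj j i) =
      R.coeff (Finsupp.equivFunOnFinite.symm (Nj j)) * ∏ i, (z i - ζ i) ^ (Nj j i) := fun j => by
    have := hne (Nj j)
    field_simp
  simp only [this]
  refine Finset.sum_of_injOn (fun d : Fin n →₀ ℕ => e.symm (⇑d)) ?_ ?_ ?_ ?_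
  · intro a _ b _ h
    exact DFunLike.coe_injective (e.symm.injective h)
  · intro d hd
    simp only [Finset.coe_range, Set.mem_Iio]
    exact Nat.lt_succ_of_le ((hΛ d hd).trans hlam)
  · intro j _ hj
    have : Finsupp.equivFunOnFinite.symm (Nj j) ∉ R.support := by
      intro h
      apply hj
      refine ⟨_, h, ?_⟩
      show e.symm (Nj j) = j
      exact e.symm_apply_apply j
    rw [MvPolynomial.notMem_support_iff.1 this, zero_mul]
  · intro d hd
    have h1 : Nj (e.symm (⇑d)) = ⇑d := e.apply_symm_apply _
    simp only [h1]
    congr 2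
    ext j; simp

end PartFour


noncomputable section PartFourB

variable {n : ℕ}

lemma two_set {K L : Set (Fin n → ℂ)} (hK : IsCompact K) (hKc : Convex ℝ K) (hL : IsCompact L)
    (hLc : Convex ℝ L) (hd : Disjoint L K) (g P : MvPolynomial (Fin n) ℂ) {ε : ℝ} (hε : 0 < ε) :
    ∃ Q : MvPolynomial (Fin n) ℂ, (∀ z ∈ L, ‖MvPolynomial.eval z Q - MvPolynomial.eval z g‖ < ε) ∧
      (∀ z ∈ K, ‖MvPolynomial.eval z Q - MvPolynomial.eval z P‖ < ε) := by
  obtain ⟨φ, u, v, hu, huv, hv⟩ :=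
    RCLike.geometric_hahn_banach_compact_closed (𝕜 := ℂ) hLc hL hKc hK.isClosed hd
  let T : MvPolynomial (Fin n) ℂ :=
    (∑ i, MvPolynomial.C (φ (Pi.single i 1)) * MvPolynomial.X i) - MvPolynomial.C (((u + v) / 2 : ℝ) : ℂ)
  have hT : ∀ z, MvPolynomial.eval z T = φ z - (((u + v) / 2 : ℝ) : ℂ) := by
    intro z
    simp only [T, map_sub, map_sum, map_mul, MvPolynomial.eval_C, MvPolynomial.eval_X]
    congr 1
    conv_rhs => rw [pi_eq_sum_univ' z]
    rw [map_sum]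
    refine Finset.sum_congr rfl fun i _ => ?_
    rw [map_smul, smul_eq_mul, mul_comm]
  have hcont : ∀ R : MvPolynomial (Fin n) ℂ, Continuous fun z => MvPolynomial.eval z R :=
    fun R => MvPolynomial.continuous_eval R
  obtain ⟨M, hM⟩ := (hK.union hL).exists_bound_of_continuousOn (hcont (P - g)).continuousOn
  have hM1 : 0 < |M| + 1 := by positivity
  obtain ⟨q, hqA, hqB⟩ := runge_sep (hL.image (hcont T)) (hK.image (hcont T))
    (by rintro _ ⟨z, hz, rfl⟩
        have := hu z hz
        simp only [hT, Complex.sub_re, Complex.ofReal_re]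
        change (φ z).re < u at this
        linarith)
    (by rintro _ ⟨z, hz, rfl⟩
        have := hv z hz
        simp only [hT, Complex.sub_re, Complex.ofReal_re]
        change v < (φ z).re at this
        linarith) (ε := ε / (|M| + 1)) (by positivity)
  have hq : ∀ z, MvPolynomial.eval z (Polynomial.aeval T q) = q.eval (MvPolynomial.eval z T) := by
    intro z
    rw [Polynomial.aeval_def, Polynomial.hom_eval₂, Polynomial.eval]
    congr 1
    ext x <;> simp
  refine ⟨g + (P - g) * Polynomial.aeval T q, fun z hz => ?_, fun z hz => ?_⟩
  · have h1 := hqA _ ⟨z, hz, rfl⟩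
    have h2 := (hM z (Or.inr hz)).trans (le_abs_self M)
    rw [map_add, map_mul, hq, add_sub_cancel_left, norm_mul]
    rw [lt_div_iff₀ hM1] at h1
    nlinarith [norm_nonneg (Polynomial.eval (MvPolynomial.eval z T) q)]
  · have h1 := hqB _ ⟨z, hz, rfl⟩
    have h2 := (hM z (Or.inl hz)).trans (le_abs_self M)
    have : MvPolynomial.eval z (g + (P - g) * Polynomial.aeval T q) - MvPolynomial.eval z P =
      MvPolynomial.eval z (P - g) * (q.eval (MvPolynomial.eval z T) - 1) := by
      rw [map_add, map_mul, hq, map_sub]; ring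
    rw [this, norm_mul]
    rw [lt_div_iff₀ hM1] at h1
    nlinarith [norm_nonneg (Polynomial.eval (MvPolynomial.eval z T) q - 1)]

end PartFourB


noncomputable section PartSix

variable {n : ℕ} {Ω : Set (Fin n → ℂ)}

def oemb (n : ℕ) (Ω : Set (Fin n → ℂ)) (f : Ospace n Ω) : C(Ω, ℂ) :=
  ⟨fun z => f.1 z, f.2.continuousOn.comp_continuous continuous_subtype_val fun z => z.2⟩

lemma oemb_inducing : IsInducing (oemb n Ω) := ⟨rfl⟩

lemma oemb_tlu (hΩ : IsOpen Ω) {ι : Type*} {l : Filter ι} {F : ι → Ospace n Ω} {h : C(Ω, ℂ)}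
    {g : (Fin n → ℂ) → ℂ} (hg : ∀ z : Ω, g z = h z)
    (hF : Tendsto (fun i => oemb n Ω (F i)) l (𝓝 h)) :
    TendstoLocallyUniformlyOn (fun i => (F i).1) g l Ω := by
  have : LocallyCompactSpace Ω := hΩ.locallyCompactSpace
  rw [tendstoLocallyUniformlyOn_iff_tendstoLocallyUniformly_comp_coe]
  have h1 := ContinuousMap.tendsto_iff_tendstoLocallyUniformly.1 hF
  have h2 : g ∘ Subtype.val = h := funext hg
  rw [h2]
  exact h1

lemma nhds_tlu (hΩ : IsOpen Ω) (f : Ospace n Ω) :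
    TendstoLocallyUniformlyOn (fun i : Ospace n Ω => i.1) f.1 (𝓝 f) Ω :=
  oemb_tlu hΩ (F := fun i => i) (h := oemb n Ω f) (fun _ => rfl)
    (oemb_inducing.continuous.tendsto f)

lemma Ospace_baire (hΩ : IsOpen Ω) : BaireSpace (Ospace n Ω) := by
  have : LocallyCompactSpace Ω := hΩ.locallyCompactSpace
  let _ : UniformSpace (Ospace n Ω) := UniformSpace.comap (oemb n Ω) inferInstance
  have hui : IsUniformInducing (oemb n Ω) := ⟨rfl⟩
  have hcg : (uniformity (Ospace n Ω)).IsCountablyGenerated :=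
    Filter.comap.isCountablyGenerated _ _
  have hcl : IsClosed (Set.range (oemb n Ω)) := by
    refine isClosed_of_closure_subset fun h hh => ?_
    have hne : (comap (oemb n Ω) (𝓝 h)).NeBot := by
      rw [comap_neBot_iff_frequently]
      exact mem_closure_iff_frequently.1 hh
    classical
    let g : (Fin n → ℂ) → ℂ := fun z => if hz : z ∈ Ω then h ⟨z, hz⟩ else 0
    have hg : ∀ z : Ω, g z = h z := fun z => by simp [g]
    have ht := oemb_tlu hΩ (F := fun i => i) hg (tendsto_comap (f := oemb n Ω) (x := 𝓝 h))
    have hd := (unif_limit hΩ ht fun k => k.2).1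
    exact ⟨⟨g, hd⟩, ContinuousMap.ext hg⟩
  have hcs : CompleteSpace (Ospace n Ω) := hui.completeSpace hcl.isComplete
  have hb : @BaireSpace (Ospace n Ω) UniformSpace.toTopologicalSpace := inferInstance
  exact hb

lemma pd_iter_tlu (hΩ : IsOpen Ω) {ι : Type*} {l : Filter ι} [l.NeBot] (i : Fin n) (k : ℕ) :
    ∀ {F : ι → (Fin n → ℂ) → ℂ} {g : (Fin n → ℂ) → ℂ},
    (∀ j, DifferentiableOn ℂ (F j) Ω) → TendstoLocallyUniformlyOn F g l Ω →
    (∀ j, DifferentiableOn ℂ ((pd i)^[k] (F j)) Ω) ∧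
      TendstoLocallyUniformlyOn (fun j => (pd i)^[k] (F j)) ((pd i)^[k] g) l Ω := by
  induction k with
  | zero => intro F g h1 h2; exact ⟨h1, h2⟩
  | succ k ih =>
    intro F g h1 h2
    simp only [Function.iterate_succ_apply]
    refine ih (F := fun j => pd i (F j)) (fun j => fderiv_apply_differentiableOn hΩ (h1 j) _) ?_
    have h3 := (unif_limit hΩ h2 h1).2
    exact (ContinuousLinearMap.apply ℂ ℂ (Pi.single i (1 : ℂ) : Fin n → ℂ)).uniformContinuous.comp_tendstoLocallyUniformlyOn h3

lemma Dml_tlu (hΩ : IsOpen Ω) {ι : Type*} {l : Filter ι} [l.NeBot] (ℓ : Fin n → ℕ)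
    {F : ι → (Fin n → ℂ) → ℂ} {g : (Fin n → ℂ) → ℂ}
    (h1 : ∀ j, DifferentiableOn ℂ (F j) Ω) (h2 : TendstoLocallyUniformlyOn F g l Ω) :
    TendstoLocallyUniformlyOn (fun j => Dml ℓ (F j)) (Dml ℓ g) l Ω := by
  have : ∀ L : List (Fin n),
      (∀ j, DifferentiableOn ℂ (L.foldr (fun i g => (pd i)^[ℓ i] g) (F j)) Ω) ∧
      TendstoLocallyUniformlyOn (fun j => L.foldr (fun i g => (pd i)^[ℓ i] g) (F j))
        (L.foldr (fun i g => (pd i)^[ℓ i] g) g) l Ω := by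
    intro L
    induction L with
    | nil => exact ⟨h1, h2⟩
    | cons a L ih =>
      simp only [List.foldr_cons]
      exact pd_iter_tlu hΩ a (ℓ a) ih.1 ih.2
  exact (this _).2

lemma Dml_continuous (hΩ : IsOpen Ω) {ζ : Fin n → ℂ} (hζ : ζ ∈ Ω) (ℓ : Fin n → ℕ) :
    Continuous fun f : Ospace n Ω => Dml ℓ f.1 ζ := by
  rw [continuous_iff_continuousAt]
  intro f
  exact (Dml_tlu hΩ ℓ (fun j : Ospace n Ω => j.2) (nhds_tlu hΩ f)).tendsto_at hζ

lemma pSum_continuous (hΩ : IsOpen Ω) {ζ : Fin n → ℂ} (hζ : ζ ∈ Ω) (Nj : ℕ → Fin n → ℕ)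
    (lam : ℕ) : Continuous fun p : Ospace n Ω × (Fin n → ℂ) => pSum Nj p.1.1 ζ lam p.2 := by
  simp only [pSum, pSumExt]
  refine continuous_finsetSum _ fun j _ => ?_
  refine (continuous_const.mul ((Dml_continuous hΩ hζ (Nj j)).comp continuous_fst)).mul ?_
  fun_prop

lemma eval_tendsto (hΩ : IsOpen Ω) (f : Ospace n Ω) {z : Fin n → ℂ} (hz : z ∈ Ω) :
    Tendsto (fun p : Ospace n Ω × (Fin n → ℂ) => p.1.1 p.2) (𝓝 (f, z)) (𝓝 (f.1 z)) := by
  refine tendsto_comp_of_locally_uniform_limit (F := fun p : Ospace n Ω × (Fin n → ℂ) => p.1.1)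
    (g := Prod.snd) (f.2.continuousOn.continuousAt (hΩ.mem_nhds hz))
    (continuous_snd.tendsto _) ?_
  intro u hu
  obtain ⟨t, ht, h⟩ := nhds_tlu hΩ f u hu z hz
  refine ⟨t, (hΩ.nhdsWithin_eq hz) ▸ ht, ?_⟩
  exact (continuous_fst.tendsto (f, z)).eventually h

def Gset (Ω : Set (Fin n → ℂ)) (𝕄 : Set ℕ) (Nj : ℕ → Fin n → ℕ) (ζ : Fin n → ℂ)
    (K L : Set (Fin n → ℂ)) (P : MvPolynomial (Fin n) ℂ) (ε : ℝ) : Set (Ospace n Ω) :=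
  {f | ∃ lam ∈ 𝕄, (∀ z ∈ K, ‖pSum Nj f.1 ζ lam z - mvEval P z‖ < ε) ∧
    (∀ z ∈ L, ‖pSum Nj f.1 ζ lam z - f.1 z‖ < ε)}

lemma mvEval_continuous (P : MvPolynomial (Fin n) ℂ) : Continuous (mvEval P) :=
  MvPolynomial.continuous_eval P

lemma Gset_isOpen (hΩ : IsOpen Ω) (𝕄 : Set ℕ) (Nj : ℕ → Fin n → ℕ) {ζ : Fin n → ℂ} (hζ : ζ ∈ Ω)
    {K L : Set (Fin n → ℂ)} (hK : IsCompact K) (hL : IsCompact L) (hLΩ : L ⊆ Ω)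
    (P : MvPolynomial (Fin n) ℂ) (ε : ℝ) : IsOpen (Gset Ω 𝕄 Nj ζ K L P ε) := by
  rw [isOpen_iff_eventually]
  rintro f ⟨lam, hlam, h1, h2⟩
  have hS := pSum_continuous hΩ hζ Nj lam
  have e1 : ∀ᶠ f' : Ospace n Ω in 𝓝 f, ∀ z ∈ K, ‖pSum Nj f'.1 ζ lam z - mvEval P z‖ < ε := by
    refine hK.eventually_forall_of_forall_eventually fun z hz => ?_
    have : Tendsto (fun p : Ospace n Ω × (Fin n → ℂ) => ‖pSum Nj p.1.1 ζ lam p.2 - mvEval P p.2‖)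
        (𝓝 (f, z)) (𝓝 ‖pSum Nj f.1 ζ lam z - mvEval P z‖) :=
      ((hS.sub ((mvEval_continuous P).comp continuous_snd)).norm).tendsto (f, z)
    exact this.eventually (gt_mem_nhds (h1 z hz))
  have e2 : ∀ᶠ f' : Ospace n Ω in 𝓝 f, ∀ z ∈ L, ‖pSum Nj f'.1 ζ lam z - f'.1 z‖ < ε := by
    refine hL.eventually_forall_of_forall_eventually fun z hz => ?_
    have : Tendsto (fun p : Ospace n Ω × (Fin n → ℂ) => ‖pSum Nj p.1.1 ζ lam p.2 - p.1.1 p.2‖)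
        (𝓝 (f, z)) (𝓝 ‖pSum Nj f.1 ζ lam z - f.1 z‖) :=
      ((hS.tendsto (f, z)).sub (eval_tendsto hΩ f (hLΩ hz))).norm
    exact this.eventually (gt_mem_nhds (h2 z hz))
  filter_upwards [e1, e2] with f' h1' h2'
  exact ⟨lam, hlam, h1', h2'⟩

lemma exists_exhaustion (hΩ : IsOpen Ω) : ∃ E : ℕ → Set (Fin n → ℂ), (∀ k, IsCompact (E k)) ∧
    (∀ k, E k ⊆ Ω) ∧ ∀ L, IsCompact L → L ⊆ Ω → ∃ k₀, ∀ k ≥ k₀, L ⊆ E k := by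
  have : LocallyCompactSpace Ω := hΩ.locallyCompactSpace
  let X := CompactExhaustion.choice Ω
  refine ⟨fun k => Subtype.val '' X k, fun k => (X.isCompact k).image continuous_subtype_val,
    fun k => by rintro _ ⟨z, _, rfl⟩; exact z.2, fun L hL hLΩ => ?_⟩
  have hc : IsCompact (Subtype.val ⁻¹' L : Set Ω) := by
    rw [Subtype.isCompact_iff, Subtype.image_preimage_coe, inter_eq_self_of_subset_right hLΩ]
    exact hL
  obtain ⟨k₀, hk⟩ := X.exists_superset_of_isCompact hc
  refine ⟨k₀, fun k hkk z hz => ⟨⟨z, hLΩ hz⟩, X.subset hkk (hk hz), rfl⟩⟩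

end PartSix


noncomputable section PartSeven

variable {n : ℕ} {Ω : Set (Fin n → ℂ)}

lemma exists_convex_compact (hΩ : IsOpen Ω) (hΩc : Convex ℝ Ω) {L : Set (Fin n → ℂ)}
    (hL : IsCompact L) (hLΩ : L ⊆ Ω) : ∃ L', IsCompact L' ∧ Convex ℝ L' ∧ L ⊆ L' ∧ L' ⊆ Ω := by
  have h : ∀ x : Ω, ∃ t : Set (Fin n → ℂ), t.Finite ∧ (x : Fin n → ℂ) ∈ interior (convexHull ℝ t) ∧
      convexHull ℝ t ⊆ Ω := by
    intro x
    obtain ⟨b, h1, h2⟩ := exists_mem_interior_convexHull_affineBasis (hΩ.mem_nhds x.2)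
    exact ⟨_, Set.finite_range b, h1, h2⟩
  choose t ht1 ht2 ht3 using h
  obtain ⟨F, hF⟩ := hL.elim_finite_subcover (fun x : Ω => interior (convexHull ℝ (t x)))
    (fun _ => isOpen_interior) (fun z hz => mem_iUnion.2 ⟨⟨z, hLΩ hz⟩, ht2 _⟩)
  have hfin : (⋃ x ∈ F, t x).Finite := F.finite_toSet.biUnion fun x _ => ht1 x
  refine ⟨convexHull ℝ (⋃ x ∈ F, t x), hfin.isCompact_convexHull ℝ, convex_convexHull _ _, ?_, ?_⟩
  · intro z hz
    obtain ⟨x, hx, hzx⟩ := mem_iUnion₂.1 (hF hz)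
    exact convexHull_mono (subset_biUnion_of_mem (u := fun x => t x) hx) (interior_subset hzx)
  · refine convexHull_min (iUnion₂_subset fun x _ => (subset_convexHull ℝ _).trans (ht3 x)) hΩc

lemma exists_family (Ω : Set (Fin n → ℂ)) : ∃ 𝒲 : Set (Set (Fin n → ℂ)), 𝒲.Countable ∧
    (∀ W ∈ 𝒲, IsCompact W ∧ Convex ℝ W ∧ W ∩ closure Ω = ∅) ∧
    ∀ K, IsCompact K → Convex ℝ K → K ∩ closure Ω = ∅ → ∃ W ∈ 𝒲, K ⊆ W := by
  obtain ⟨D, hDc, hD⟩ := TopologicalSpace.exists_countable_dense (Fin n → ℂ)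
  let H : ℕ × Set (Fin n → ℂ) → Set (Fin n → ℂ) := fun p =>
    closure (convexHull ℝ (⋃ x ∈ p.2, Metric.closedBall x (1 / ((p.1 : ℝ) + 1))))
  let T : Set (ℕ × Set (Fin n → ℂ)) := univ ×ˢ {t | t.Finite ∧ t ⊆ D}
  have hT : T.Countable := countable_univ.prod (Set.countable_ofPred_finite_subset hDc)
  refine ⟨H '' T ∩ {W | W ∩ closure Ω = ∅}, (hT.image H).mono inter_subset_left, ?_, ?_⟩
  · rintro _ ⟨⟨⟨k, t⟩, ⟨_, ht, _⟩, rfl⟩, hW⟩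
    refine ⟨?_, (convex_convexHull _ _).closure, hW⟩
    apply Bornology.IsBounded.isCompact_closure
    rw [isBounded_convexHull]
    exact (Bornology.isBounded_biUnion ht).2 fun _ _ => Metric.isBounded_closedBall
  · intro K hK hKc hKΩ
    have hsub : K ⊆ (closure Ω)ᶜ := by
      rw [subset_compl_iff_disjoint_right, Set.disjoint_iff_inter_eq_empty]; exact hKΩ
    obtain ⟨δ, hδ, hδs⟩ := hK.exists_cthickening_subset_open isClosed_closure.isOpen_compl hsub
    obtain ⟨k, hk⟩ := exists_nat_one_div_lt (show 0 < δ / 2 by positivity)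
    set r : ℝ := 1 / ((k : ℝ) + 1) with hr
    have hr0 : 0 < r := by positivity
    obtain ⟨t, htD, htf, htK⟩ := hK.elim_finite_subcover_image
      (b := {d ∈ D | ∃ x ∈ K, dist d x < r}) (c := fun d => Metric.ball d r)
      (fun _ _ => Metric.isOpen_ball) (by
        intro x hx
        obtain ⟨d, hd, hxd⟩ := hD.exists_dist_lt x hr0
        refine mem_iUnion₂.2 ⟨d, ⟨hd, x, hx, ?_⟩, ?_⟩
        · rwa [dist_comm]
        · exact hxd)
    have hHs : H (k, t) ⊆ Metric.cthickening δ K := by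
      refine closure_minimal (convexHull_min ?_ (hKc.cthickening δ)) Metric.isClosed_cthickening
      refine iUnion₂_subset fun d hd z hz => ?_
      obtain ⟨_, x, hx, hdx⟩ := htD hd
      refine Metric.mem_cthickening_of_dist_le z x δ K hx ?_
      have := Metric.mem_closedBall.1 hz
      simp only at this
      have h3 := dist_triangle z d x
      linarith
    refine ⟨H (k, t), ⟨⟨(k, t), ⟨mem_univ _, htf, fun d hd => (htD hd).1⟩, rfl⟩, ?_⟩, ?_⟩
    · have := hHs.trans hδs
      rw [subset_compl_iff_disjoint_right, Set.disjoint_iff_inter_eq_empty] at this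
      exact this
    · intro x hx
      obtain ⟨d, hd, hxd⟩ := mem_iUnion₂.1 (htK hx)
      apply subset_closure
      apply subset_convexHull
      exact mem_iUnion₂.2 ⟨d, hd, Metric.ball_subset_closedBall hxd⟩

lemma exists_polys {W : Set (Fin n → ℂ)} (hW : IsCompact W) :
    ∃ D : Set (MvPolynomial (Fin n) ℂ), D.Countable ∧
      ∀ P : MvPolynomial (Fin n) ℂ, ∀ ε > 0, ∃ R ∈ D, ∀ z ∈ W, ‖mvEval R z - mvEval P z‖ < ε := by
  have : CompactSpace W := isCompact_iff_compactSpace.1 hW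
  let T : MvPolynomial (Fin n) ℂ → C(W, ℂ) := fun P =>
    ⟨fun z => mvEval P z, (mvEval_continuous P).comp continuous_subtype_val⟩
  obtain ⟨t, ht, htc, htd⟩ :=
    (TopologicalSpace.IsSeparable.of_separableSpace (range T)).exists_countable_dense_subset
  have ht' : ∀ c ∈ t, ∃ P, T P = c := fun c hc => ht hc
  choose! g hg using ht'
  refine ⟨g '' t, htc.image g, fun P ε hε => ?_⟩
  obtain ⟨c, hc, hcd⟩ := Metric.mem_closure_iff.1 (htd (mem_range_self P)) ε hε
  refine ⟨g c, mem_image_of_mem g hc, fun z hz => ?_⟩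
  have h1 := (ContinuousMap.dist_apply_le_dist (f := T P) (g := c) (⟨z, hz⟩ : W)).trans_lt hcd
  rw [← hg c hc, dist_comm, dist_eq_norm] at h1
  exact h1

lemma key_approx (hΩ : IsOpen Ω) (hΩc : Convex ℝ Ω) {ζ : Fin n → ℂ} (hζ : ζ ∈ Ω)
    {K L : Set (Fin n → ℂ)} (hK : IsCompact K) (hKc : Convex ℝ K) (hKΩ : K ∩ Ω = ∅)
    (hL : IsCompact L) (hLΩ : L ⊆ Ω) (f : Ospace n Ω) (P : MvPolynomial (Fin n) ℂ)
    {ε : ℝ} (hε : 0 < ε) :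
    ∃ Q : MvPolynomial (Fin n) ℂ, (∀ z ∈ L, ‖mvEval Q z - f.1 z‖ < ε) ∧
      (∀ z ∈ K, ‖mvEval Q z - mvEval P z‖ < ε) := by
  obtain ⟨L', hL', hL'c, hLL', hL'Ω⟩ := exists_convex_compact hΩ hΩc hL hLΩ
  obtain ⟨g, hg⟩ := poly_dense hΩ hΩc hL hLΩ hζ f.2 (half_pos hε)
  obtain ⟨Q, hQ1, hQ2⟩ := two_set hK hKc hL' hL'c
    (by
      rw [Set.disjoint_left]
      intro z hz hzK
      have : z ∈ K ∩ Ω := ⟨hzK, hL'Ω hz⟩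
      rw [hKΩ] at this
      exact this) g P (half_pos hε)
  refine ⟨Q, fun z hz => ?_, fun z hz => (hQ2 z hz).trans (half_lt_self hε)⟩
  have h1 := hg z hz
  have h2 := hQ1 z (hLL' hz)
  rw [norm_sub_rev] at h1
  have h3 : mvEval Q z - f.1 z =
    (MvPolynomial.eval z Q - MvPolynomial.eval z g) + (MvPolynomial.eval z g - f.1 z) := by
    simp [mvEval]
  rw [h3]
  refine (norm_add_le _ _).trans_lt ?_
  linarith

lemma mvEval_differentiable (Q : MvPolynomial (Fin n) ℂ) : Differentiable ℂ (mvEval Q) := by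
  unfold mvEval
  induction Q using MvPolynomial.induction_on with
  | C a => simp
  | add p q hp hq => simpa only [map_add] using hp.fun_add hq
  | mul_X p i hp =>
    simp only [map_mul, MvPolynomial.eval_X]
    exact hp.fun_mul (differentiable_apply i)

def polyO (Ω : Set (Fin n → ℂ)) (Q : MvPolynomial (Fin n) ℂ) : Ospace n Ω :=
  ⟨mvEval Q, (mvEval_differentiable Q).differentiableOn⟩

lemma Gset_dense (hΩ : IsOpen Ω) (hΩc : Convex ℝ Ω) {𝕄 : Set ℕ} (h𝕄 : 𝕄.Infinite)
    {Nj : ℕ → Fin n → ℕ} (hNj : Function.Bijective Nj) {ζ : Fin n → ℂ} (hζ : ζ ∈ Ω)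
    {K L : Set (Fin n → ℂ)} (hK : IsCompact K) (hKc : Convex ℝ K) (hKΩ : K ∩ Ω = ∅)
    (P : MvPolynomial (Fin n) ℂ) {ε : ℝ} (hε : 0 < ε) : Dense (Gset Ω 𝕄 Nj ζ K L P ε) := by
  intro f
  obtain ⟨E, hE1, hE2, hE3⟩ := exists_exhaustion hΩ
  have hex : ∀ k : ℕ, ∃ Q : MvPolynomial (Fin n) ℂ,
      (∀ z ∈ E k, ‖mvEval Q z - f.1 z‖ < 1 / ((k : ℝ) + 1)) ∧
      (polyO Ω Q ∈ Gset Ω 𝕄 Nj ζ K L P ε) := by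
    intro k
    obtain ⟨Q, h1, h2⟩ := key_approx hΩ hΩc hζ hK hKc hKΩ (hE1 k) (hE2 k) f P
      (lt_min hε (show 0 < 1 / ((k : ℝ) + 1) by positivity))
    refine ⟨Q, fun z hz => (h1 z hz).trans_le (min_le_right _ _), ?_⟩
    obtain ⟨Λ, hΛ⟩ := pSum_poly Nj hNj ζ Q
    obtain ⟨lam, hlam, hl⟩ := h𝕄.exists_gt Λ
    have hS : pSum Nj (polyO Ω Q).1 ζ lam = mvEval Q := hΛ lam hl.le
    refine ⟨lam, hlam, fun z hz => ?_, fun z hz => ?_⟩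
    · rw [hS]; exact (h2 z hz).trans_le (min_le_left _ _)
    · rw [hS]
      show ‖mvEval Q z - mvEval Q z‖ < ε
      simpa using hε
  choose Q hQ1 hQ2 using hex
  refine mem_closure_of_tendsto (f := fun k => polyO Ω (Q k)) (b := atTop) ?_
    (Eventually.of_forall hQ2)
  rw [oemb_inducing.tendsto_nhds_iff, ContinuousMap.tendsto_iff_forall_isCompact_tendstoUniformlyOn]
  intro C hC
  obtain ⟨k₀, hk₀⟩ := hE3 _ (hC.image continuous_subtype_val)
    (by rintro _ ⟨z, _, rfl⟩; exact z.2)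
  rw [Metric.tendstoUniformlyOn_iff]
  intro δ hδ
  obtain ⟨k₁, hk₁⟩ := exists_nat_one_div_lt hδ
  filter_upwards [eventually_ge_atTop (max k₀ k₁)] with k hk z hz
  have h1 := hQ1 k z (hk₀ k ((le_max_left _ _).trans hk) ⟨z, hz, rfl⟩)
  rw [dist_comm, dist_eq_norm]
  refine h1.trans_le (le_trans ?_ hk₁.le)
  have : (k₁ : ℝ) ≤ k := by exact_mod_cast (le_max_right _ _).trans hk
  gcongr

end PartSeven

/-- Theorem 2.5: universal Taylor series in `O(Ω)` simultaneously for all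
compact convex sets disjoint from the closure of `Ω` and for the members of a given
sequence `(K_m)` of compact convex sets disjoint from `Ω`. -/
theorem thm2_5 (n : ℕ) (𝕄 : Set ℕ) (h𝕄 : 𝕄.Infinite)
    (Ω : Set (Fin n → ℂ)) (hΩo : IsOpen Ω) (hΩcv : Convex ℝ Ω)
    (Km : ℕ → Set (Fin n → ℂ))
    (hKm : ∀ m, IsCompact (Km m) ∧ Convex ℝ (Km m) ∧ Km m ∩ Ω = ∅)
    (ζ : Fin n → ℂ) (hζ : ζ ∈ Ω)
    (Nj : ℕ → Fin n → ℕ) (hNj : Function.Bijective Nj) :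
    ∃ U : Set (Ospace n Ω),
      U = {f : Ospace n Ω |
        ∀ K : Set (Fin n → ℂ), IsCompact K → Convex ℝ K →
          (K ∩ closure Ω = ∅ ∨ ∃ m, K = Km m) →
          ∀ P : MvPolynomial (Fin n) ℂ, ∃ lam : ℕ → ℕ, (∀ N, lam N ∈ 𝕄) ∧
            TendstoUniformlyOn (fun N => pSum Nj f.1 ζ (lam N)) (mvEval P) atTop K ∧
            ∀ L : Set (Fin n → ℂ), L ⊆ Ω → IsCompact L →
              TendstoUniformlyOn (fun N => pSum Nj f.1 ζ (lam N)) f.1 atTop L} ∧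
      U.Nonempty ∧ Dense U ∧ IsGδ U := by
  obtain ⟨𝒲₀, h𝒲c₀, h𝒲₀, h𝒲cov⟩ := exists_family Ω
  obtain ⟨E, hE1, hE2, hE3⟩ := exists_exhaustion hΩo
  let 𝒲 : Set (Set (Fin n → ℂ)) := 𝒲₀ ∪ range Km
  have h𝒲c : 𝒲.Countable := h𝒲c₀.union (countable_range Km)
  have h𝒲 : ∀ W ∈ 𝒲, IsCompact W ∧ Convex ℝ W ∧ W ∩ Ω = ∅ ∧
      (W ∩ closure Ω = ∅ ∨ ∃ m, W = Km m) := by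
    rintro W (hW | ⟨m, rfl⟩)
    · obtain ⟨h1, h2, h3⟩ := h𝒲₀ W hW
      refine ⟨h1, h2, ?_, Or.inl h3⟩
      exact subset_empty_iff.1 (h3 ▸ inter_subset_inter_right W subset_closure)
    · exact ⟨(hKm m).1, (hKm m).2.1, (hKm m).2.2, Or.inr ⟨m, rfl⟩⟩
  have hpoly : ∀ W ∈ 𝒲, ∃ D : Set (MvPolynomial (Fin n) ℂ), D.Countable ∧
      ∀ P : MvPolynomial (Fin n) ℂ, ∀ ε > 0, ∃ R ∈ D, ∀ z ∈ W, ‖mvEval R z - mvEval P z‖ < ε :=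
    fun W hW => exists_polys (h𝒲 W hW).1
  choose! D hDc hD using hpoly
  let G : Set (Fin n → ℂ) → MvPolynomial (Fin n) ℂ → ℕ → Set (Ospace n Ω) := fun W R k =>
    Gset Ω 𝕄 Nj ζ W (E k) R (1 / ((k : ℝ) + 1))
  let U : Set (Ospace n Ω) := ⋂ W ∈ 𝒲, ⋂ R ∈ D W, ⋂ k, G W R k
  have hGo : ∀ W ∈ 𝒲, ∀ R k, IsOpen (G W R k) := fun W hW R k =>
    Gset_isOpen hΩo 𝕄 Nj hζ (h𝒲 W hW).1 (hE1 k) (hE2 k) R _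
  have hGd : ∀ W ∈ 𝒲, ∀ R k, Dense (G W R k) := fun W hW R k =>
    Gset_dense hΩo hΩcv h𝕄 hNj hζ (h𝒲 W hW).1 (h𝒲 W hW).2.1 (h𝒲 W hW).2.2.1 R (by positivity)
  have hB : BaireSpace (Ospace n Ω) := Ospace_baire hΩo
  have hUG1 : ∀ W ∈ 𝒲, ∀ R, IsGδ (⋂ k, G W R k) := fun W hW R =>
    .iInter fun k => (hGo W hW R k).isGδ
  have hUG2 : ∀ W ∈ 𝒲, IsGδ (⋂ R ∈ D W, ⋂ k, G W R k) := fun W hW =>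
    .biInter (hDc W hW) fun R _ => hUG1 W hW R
  have hUG : IsGδ U := .biInter h𝒲c fun W hW => hUG2 W hW
  have hUd : Dense U := by
    refine dense_biInter_of_Gδ (fun W hW => hUG2 W hW) h𝒲c fun W hW => ?_
    refine dense_biInter_of_Gδ (fun R _ => hUG1 W hW R) (hDc W hW) fun R _ => ?_
    exact dense_iInter_of_isOpen (hGo W hW R) (hGd W hW R)
  have hne : Nonempty (Ospace n Ω) := ⟨polyO Ω 0⟩
  refine ⟨U, ?_, hUd.nonempty, hUd, hUG⟩
  ext f
  rw [Set.mem_ofPred_eq]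
  constructor
  · intro hf K hK hKc hKor P
    obtain ⟨W, hW, hKW⟩ : ∃ W ∈ 𝒲, K ⊆ W := by
      rcases hKor with h | ⟨m, rfl⟩
      · obtain ⟨W, hW, hKW⟩ := h𝒲cov K hK hKc h
        exact ⟨W, Or.inl hW, hKW⟩
      · exact ⟨Km m, Or.inr ⟨m, rfl⟩, Subset.rfl⟩
    have hex : ∀ N : ℕ, ∃ lam ∈ 𝕄,
        (∀ z ∈ W, ‖pSum Nj f.1 ζ lam z - mvEval P z‖ < 2 * (1 / ((N : ℝ) + 1))) ∧
        (∀ z ∈ E N, ‖pSum Nj f.1 ζ lam z - f.1 z‖ < 1 / ((N : ℝ) + 1)) := by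
      intro N
      obtain ⟨R, hR, hRP⟩ := hD W hW P (1 / ((N : ℝ) + 1)) (by positivity)
      have hfG : f ∈ G W R N := by
        have := hf
        simp only [U, mem_iInter] at this
        exact this W hW R hR N
      obtain ⟨lam, hlam, h1, h2⟩ := hfG
      refine ⟨lam, hlam, fun z hz => ?_, h2⟩
      have h3 := norm_sub_le_norm_sub_add_norm_sub (pSum Nj f.1 ζ lam z) (mvEval R z) (mvEval P z)
      have h4 := h1 z hz
      have h5 := hRP z hz
      linarith
    choose lam hlam h1 h2 using hex
    have hlim : Tendsto (fun N : ℕ => 1 / ((N : ℝ) + 1)) atTop (𝓝 0) :=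
      tendsto_one_div_add_atTop_nhds_zero_nat
    refine ⟨lam, hlam, ?_, fun L hLΩ hL => ?_⟩
    · rw [Metric.tendstoUniformlyOn_iff]
      intro ε hε
      filter_upwards [hlim.eventually (gt_mem_nhds (half_pos hε))] with N hN z hz
      rw [dist_comm, dist_eq_norm]
      have := h1 N z (hKW hz)
      linarith
    · rw [Metric.tendstoUniformlyOn_iff]
      intro ε hε
      obtain ⟨k₀, hk₀⟩ := hE3 L hL hLΩ
      filter_upwards [hlim.eventually (gt_mem_nhds hε), eventually_ge_atTop k₀] with N hN hk z hz
      rw [dist_comm, dist_eq_norm]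
      exact (h2 N z (hk₀ N hk hz)).trans hN
  · intro hf
    simp only [U, mem_iInter]
    intro W hW R _ k
    obtain ⟨lam, hlam, h1, h2⟩ := hf W (h𝒲 W hW).1 (h𝒲 W hW).2.1 (h𝒲 W hW).2.2.2 R
    have hk : 0 < 1 / ((k : ℝ) + 1) := by positivity
    have e1 := Metric.tendstoUniformlyOn_iff.1 h1 _ hk
    have e2 := Metric.tendstoUniformlyOn_iff.1 (h2 (E k) (hE2 k) (hE1 k)) _ hk
    obtain ⟨N, hN1, hN2⟩ := (e1.and e2).exists
    refine ⟨lam N, hlam N, fun z hz => ?_, fun z hz => ?_⟩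
    · rw [← dist_eq_norm, dist_comm]; exact hN1 z hz
    · rw [← dist_eq_norm, dist_comm]; exact hN2 z hz

end
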